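/- For any w ∈ S_{N−1}, the operator-valued identity B_{w(1)}(σ_1) B_{w(2)}(σ_2) ⋯ B_{w(N−1)}(σ_{N−1}) = ∂̄^β_{w^{−1} ω_{N−1}} ( B_{N−1}(σ_1) B_{N−2}(σ_2) ⋯ B_1(σ_{N−1}) ) holds, where ω_{N−1} ∈ S_{N−1} is the longest permutation, ∂̄^β_i := ∂^β_i + β acts in the variables σ_i, σ_{i+1}, ∂̄^β_v := ∂̄^β_{i_1} ⋯ ∂̄^β_{i_ℓ} for any reduced word v = s_{i_1} ⋯ s_{i_ℓ}, and the operators ∂̄^β are applied entrywise to the End(H)-valued rational function of (σ_1,…,σ_{N−1}). -/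

import Mathlib

noncomputable section
open scoped BigOperators

variable {F : Type*}

/-- `x ⊖ y := (x - y)/(1 + β·y)`. -/
def om [Field F] (β x y : F) : F := (x - y) / (1 + β * y)

/-- `⊖ t := -t/(1 + β·t)`. -/
def negOm [Field F] (β t : F) : F := (-t) / (1 + β * t)

/-- The R-matrix `R^{(n)}(x,y)` on `V ⊗ V`, `V = F^n`, with entries
`R_{ij,kl} = (1 + [k<l]·β(x⊖y)) δ_{il} δ_{jk} + [k>l]·(x⊖y) δ_{ik} δ_{jl}`;
the row index is the pair `(i,j)`, the column index is the pair `(k,l)`. -/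
def Rmat [Field F] (n : ℕ) (β x y : F) :
    Matrix (Fin n × Fin n) (Fin n × Fin n) F := Matrix.of fun p q =>
  (if p.1 = q.2 ∧ p.2 = q.1 then (if q.1 < q.2 then 1 + β * om β x y else 1) else 0) +
  (if p.1 = q.1 ∧ p.2 = q.2 ∧ q.2 < q.1 then om β x y else 0)

/-- `R_{a i}(u, τ)` : the R-matrix acting on the auxiliary space (first factor)
and the `i`-th site of `H = (F^n)^{⊗N}`, identity elsewhere. -/
def Rsite [Field F] (n N : ℕ) (β u τ : F) (i : Fin N) :
    Matrix (Fin n × (Fin N → Fin n)) (Fin n × (Fin N → Fin n)) F := Matrix.of fun p q =>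
  Rmat n β u τ (p.1, p.2 i) (q.1, q.2 i) *
    (if ∀ j, j ≠ i → p.2 j = q.2 j then 1 else 0)

/-- The monodromy matrix `T_a(u) = R_{aN}(u,t_N) ⋯ R_{a1}(u,t_1)` on `V_a ⊗ H`. -/
def Tmono [Field F] (n N : ℕ) (β u : F) (t : Fin N → F) :
    Matrix (Fin n × (Fin N → Fin n)) (Fin n × (Fin N → Fin n)) F :=
  ((List.ofFn fun i : Fin N => Rsite n N β u (t i) i).reverse).prod

/-- The block `T_a(u)_{r c}` (with respect to the auxiliary space) as an operator on `H`. -/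
def blockOp [Field F] (n N : ℕ) (β u : F) (t : Fin N → F) (r c : Fin n) :
    Matrix (Fin N → Fin n) (Fin N → Fin n) F :=
  Matrix.of fun s s' => Tmono n N β u t (r, s) (c, s')

/-- The natural basis vector `|n_1,…,n_N⟩` of `H` (also used as a dual basis covector). -/
def ket [Field F] (n N : ℕ) (g : Fin N → Fin n) : (Fin N → Fin n) → F :=
  fun s => if s = g then 1 else 0

/-- The Coxeter length of a permutation: its number of inversions. -/
def permLength {N : ℕ} (w : Equiv.Perm (Fin N)) : ℕ :=
  (Finset.univ.filter fun p : Fin N × Fin N => p.1 < p.2 ∧ w p.2 < w p.1).card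

/-- The longest permutation `ω_N : i ↦ N - 1 - i`. -/
def omegaPerm (N : ℕ) : Equiv.Perm (Fin N) :=
  ⟨Fin.rev, Fin.rev, fun i => Fin.rev_rev i, fun i => Fin.rev_rev i⟩

/-- The operator `∂̄^β_i = ∂^β_i + β`, acting on functions of `M+1` variables
in the pair of variables with indices `i, i+1`. -/
def ddbar [Field F] {M : ℕ} (β : F) (i : Fin M) (f : (Fin (M + 1) → F) → F) :
    (Fin (M + 1) → F) → F := fun z =>
  ((1 + β * z i.succ) * f z -
      (1 + β * z i.castSucc) * f (fun j => z (Equiv.swap i.castSucc i.succ j))) /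
    (z i.castSucc - z i.succ) + β * f z

/-- `∂̄^β_{i_1} ∂̄^β_{i_2} ⋯ ∂̄^β_{i_ℓ}` for a word `L = [i_1, …, i_ℓ]`. -/
def ddbarWord [Field F] {M : ℕ} (β : F) (L : List (Fin M)) (f : (Fin (M + 1) → F) → F) :
    (Fin (M + 1) → F) → F :=
  L.foldr (ddbar β) f

/-- `L = [i_1, …, i_ℓ]` is a reduced word for `v`, i.e. `v = s_{i_1} ⋯ s_{i_ℓ}`
with `ℓ = ℓ(v)`. -/
def IsReducedWord {M : ℕ} (L : List (Fin M)) (v : Equiv.Perm (Fin (M + 1))) : Prop :=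
  (L.map fun i => Equiv.swap (Fin.castSucc i) (Fin.succ i)).prod = v ∧ L.length = permLength v

/-- The product `B_{N-1}(σ_1) B_{N-2}(σ_2) ⋯ B_1(σ_{N-1})` for `n = N = M+2`. -/
def descB [Field F] (M : ℕ) (β : F) (t : Fin (M + 2) → F) (σ : Fin (M + 1) → F) :
    Matrix (Fin (M + 2) → Fin (M + 2)) (Fin (M + 2) → Fin (M + 2)) F :=
  (List.ofFn fun a : Fin (M + 1) =>
      blockOp (M + 2) (M + 2) β (σ a) t 0 (Fin.rev a).succ).prod

/-!
The entries of the monodromy matrix satisfy the RTT relation. Its components within a single row say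
that, for `a < b`,
`(x - y) B_a(x) B_b(y) = (1 + β x) (B_b(x) B_a(y) - B_b(y) B_a(x))`,
and this is precisely the statement that `∂̄^β_i` turns the product attached to `w s_i` into the
product attached to `w` whenever `w(i) < w(i+1)`. The letters of a reduced word of `w⁻¹ ω`
successively remove such ascents until `w` becomes `ω`, so the theorem follows by induction on the
word.

The RTT relation itself is multiplicative in commuting factors and hence reduces to one site, where
it is the Yang–Baxter equation. After clearing denominators the latter is a polynomial identity in
the spectral parameters.
-/

open scoped Kronecker

section ReducedWords

variable {M : ℕ}

lemma swap_castSucc_succ_lt_of_lt (i : Fin M) {a b : Fin (M + 1)} (hab : a < b)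
    (hne : ¬(a = i.castSucc ∧ b = i.succ)) :
    Equiv.swap i.castSucc i.succ a < Equiv.swap i.castSucc i.succ b := by
  simp only [Fin.lt_def, Fin.ext_iff, Equiv.swap_apply_def, Fin.val_castSucc, Fin.val_succ] at *
  split_ifs <;> grind

lemma permLength_one : permLength (1 : Equiv.Perm (Fin M)) = 0 :=
  Finset.card_eq_zero.mpr (Finset.filter_eq_empty_iff.mpr fun _ _ h => h.1.asymm h.2)

lemma permLength_swap_mul_le (i : Fin M) (v : Equiv.Perm (Fin (M + 1))) :
    permLength (Equiv.swap i.castSucc i.succ * v) ≤ permLength v + 1 := by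
  refine (Finset.card_le_card fun p hp => ?_).trans
    (Finset.card_insert_le (v⁻¹ i.castSucc, v⁻¹ i.succ) _)
  rw [Finset.mem_filter_univ, Equiv.Perm.mul_apply, Equiv.Perm.mul_apply] at hp
  rw [Finset.mem_insert, Finset.mem_filter_univ]
  by_contra! hnot
  have hlt : v p.1 < v p.2 := (hnot.2 hp.1).lt_of_ne (v.injective.ne hp.1.ne)
  refine hp.2.asymm (swap_castSucc_succ_lt_of_lt i hlt fun h => hnot.1 ?_)
  exact Prod.ext (Equiv.Perm.eq_inv_iff_eq.mpr h.1) (Equiv.Perm.eq_inv_iff_eq.mpr h.2)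

lemma permLength_le_permLength_swap_mul (i : Fin M) {v : Equiv.Perm (Fin (M + 1))}
    (hv : v⁻¹ i.castSucc < v⁻¹ i.succ) :
    permLength v ≤ permLength (Equiv.swap i.castSucc i.succ * v) := by
  refine Finset.card_le_card fun p hp => ?_
  rw [Finset.mem_filter_univ] at hp ⊢
  refine ⟨hp.1, swap_castSucc_succ_lt_of_lt i hp.2 fun h => hp.1.asymm ?_⟩
  rwa [Equiv.Perm.inv_eq_iff_eq.mpr h.1.symm, Equiv.Perm.inv_eq_iff_eq.mpr h.2.symm] at hv

lemma permLength_prod_swap_le_length (L : List (Fin M)) :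
    permLength (L.map fun i => Equiv.swap i.castSucc i.succ).prod ≤ L.length := by
  induction L with
  | nil => exact permLength_one.le
  | cons i L ih => exact (permLength_swap_mul_le i _).trans (Nat.succ_le_succ ih)

namespace IsReducedWord

variable {i : Fin M} {L : List (Fin M)} {v : Equiv.Perm (Fin (M + 1))}

lemma tail (h : IsReducedWord (i :: L) v) :
    IsReducedWord L (Equiv.swap i.castSucc i.succ * v) := by
  obtain ⟨rfl, hlen⟩ := h
  rw [List.map_cons, List.prod_cons, List.length_cons] at hlen
  rw [List.map_cons, List.prod_cons, Equiv.swap_mul_self_mul]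
  have hupper := permLength_swap_mul_le i (L.map fun i => Equiv.swap i.castSucc i.succ).prod
  exact ⟨rfl, (Nat.le_of_succ_le_succ (hlen.trans_le hupper)).antisymm
    (permLength_prod_swap_le_length L)⟩

lemma inv_succ_lt_inv_castSucc (h : IsReducedWord (i :: L) v) :
    v⁻¹ i.succ < v⁻¹ i.castSucc := by
  by_contra! hle
  have hne : i.castSucc ≠ i.succ := i.castSucc_lt_succ.ne
  have hgrow := permLength_le_permLength_swap_mul i (hle.lt_of_ne (v⁻¹.injective.ne hne))
  rw [← h.2, ← h.tail.2, List.length_cons] at hgrow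
  exact L.length.not_succ_le_self hgrow

end IsReducedWord

end ReducedWords

section DividedDifferences

variable {M : ℕ}

lemma exists_finRange_eq_append_castSucc_succ (i : Fin M) :
    ∃ l₁ l₂, List.finRange (M + 1) = l₁ ++ i.castSucc :: i.succ :: l₂ := by
  refine ⟨(List.finRange (M + 1)).take i, (List.finRange (M + 1)).drop (i + 2), ?_⟩
  conv_lhs => rw [← List.take_append_drop i (List.finRange (M + 1))]
  rw [List.drop_eq_getElem_cons (by simp), List.drop_eq_getElem_cons (by simp)]
  simp [Fin.ext_iff]

lemma exists_prod_ofFn_eq_mul_castSucc_succ_mul {A : Type*} [Monoid A] (i : Fin M)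
    (f : Fin (M + 1) → A) :
    ∃ P Q : A, ∀ g : Fin (M + 1) → A, (∀ j, j ≠ i.castSucc → j ≠ i.succ → g j = f j) →
      (List.ofFn g).prod = P * (g i.castSucc * g i.succ) * Q := by
  obtain ⟨l₁, l₂, hl⟩ := exists_finRange_eq_append_castSucc_succ i
  have hnodup := List.nodup_finRange (M + 1)
  rw [hl] at hnodup
  refine ⟨(l₁.map f).prod, (l₂.map f).prod, fun g hg => ?_⟩
  have h₁ : l₁.map g = l₁.map f := List.map_congr_left fun j hj => hg j
    (by rintro rfl; grind) (by rintro rfl; grind)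
  have h₂ : l₂.map g = l₂.map f := List.map_congr_left fun j hj => hg j
    (by rintro rfl; grind) (by rintro rfl; grind)
  simp only [List.ofFn_eq_map, hl, List.map_append, List.map_cons, List.prod_append,
    List.prod_cons, h₁, h₂, mul_assoc]

/-- The quadratic relations between the entries `B_a(x)` of a row of the monodromy matrix, for an
arbitrary ordered family of algebra elements depending on a spectral parameter. -/
def ExchangeRelation {ι K A : Type*} [LT ι] [CommRing K] [Ring A] [Algebra K A] (β : K)
    (B : ι → K → A) : Prop :=
  ∀ ⦃a b⦄, a < b → ∀ x y,
    (x - y) • (B a x * B b y) = (1 + β * x) • (B b x * B a y - B b y * B a x)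

lemma ExchangeRelation.comp_strictMono {ι κ K A : Type*} [Preorder ι] [Preorder κ] [CommRing K]
    [Ring A] [Algebra K A] {β : K} {B : ι → K → A} (hB : ExchangeRelation β B) {c : κ → ι}
    (hc : StrictMono c) : ExchangeRelation β (B ∘ c) :=
  fun _ _ hab => hB (hc hab)

variable [Field F] {A : Type*} [Ring A] [Algebra F A] {β : F} {B : Fin (M + 1) → F → A}

lemma apply_prod_ofFn_eq_ddbar (φ : A →ₗ[F] F) (hB : ExchangeRelation β B)
    {w : Equiv.Perm (Fin (M + 1))} {i : Fin M} (hw : w i.castSucc < w i.succ)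
    {σ : Fin (M + 1) → F} (hσ : σ i.castSucc ≠ σ i.succ) :
    φ (List.ofFn fun a => B (w a) (σ a)).prod =
      ddbar β i (fun σ' => φ (List.ofFn fun a =>
        B ((w * Equiv.swap i.castSucc i.succ) a) (σ' a)).prod) σ := by
  obtain ⟨P, Q, hPQ⟩ := exists_prod_ofFn_eq_mul_castSucc_succ_mul i fun a => B (w a) (σ a)
  have hexchange := congrArg (fun z => φ (P * z * Q)) (hB hw (σ i.castSucc) (σ i.succ))
  simp only [mul_smul_comm, smul_mul_assoc, mul_sub, sub_mul, map_smul, map_sub,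
    smul_eq_mul] at hexchange
  simp only [ddbar, Equiv.Perm.mul_apply]
  rw [hPQ _ fun _ _ _ => rfl,
    hPQ _ fun j h₁ h₂ => by rw [Equiv.swap_apply_of_ne_of_ne h₁ h₂],
    hPQ _ fun j h₁ h₂ => by rw [Equiv.swap_apply_of_ne_of_ne h₁ h₂]]
  simp only [Equiv.swap_apply_left, Equiv.swap_apply_right]
  have hsub := sub_ne_zero.mpr hσ
  field_simp
  linear_combination hexchange

theorem apply_prod_ofFn_eq_ddbarWord (φ : A →ₗ[F] F) (hB : ExchangeRelation β B)
    {w : Equiv.Perm (Fin (M + 1))} {L : List (Fin M)}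
    (hL : IsReducedWord L (w⁻¹ * omegaPerm (M + 1)))
    {σ : Fin (M + 1) → F} (hσ : Function.Injective σ) :
    φ (List.ofFn fun a => B (w a) (σ a)).prod =
      ddbarWord β L (fun σ' => φ (List.ofFn fun a => B a.rev (σ' a)).prod) σ := by
  induction L generalizing w σ with
  | nil =>
    obtain rfl : w = omegaPerm (M + 1) := inv_mul_eq_one.mp hL.1.symm
    rfl
  | cons i L ih =>
    have hw : w i.castSucc < w i.succ := by
      simpa [omegaPerm] using hL.inv_succ_lt_inv_castSucc
    have htail : IsReducedWord L
        ((w * Equiv.swap i.castSucc i.succ)⁻¹ * omegaPerm (M + 1)) := by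
      simpa only [mul_inv_rev, Equiv.swap_inv, mul_assoc] using hL.tail
    rw [apply_prod_ofFn_eq_ddbar φ hB hw (hσ.ne i.castSucc_lt_succ.ne)]
    simp only [ddbarWord, List.foldr_cons, ddbar]
    rw [ih htail hσ, ih htail (σ := fun j => σ (Equiv.swap i.castSucc i.succ j))
      (hσ.comp (Equiv.injective _))]
    rfl

end DividedDifferences

section MatrixProducts

variable {ι R : Type*} [Fintype ι] [Semiring R]

lemma mul_kronecker_mul_of_commute {X X' Y Y' : Matrix ι ι R}
    (h : ∀ a b c d, Commute (X' a b) (Y c d)) :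
    (X * X') ⊗ₖ (Y * Y') = X ⊗ₖ Y * X' ⊗ₖ Y' := by
  ext ⟨i, i'⟩ ⟨k, k'⟩
  simp only [Matrix.kronecker_apply, Matrix.mul_apply, Fintype.sum_prod_type, Finset.sum_mul_sum]
  exact Finset.sum_congr rfl fun a _ => Finset.sum_congr rfl fun b _ =>
    (h a k i' b).mul_mul_mul_comm _ _

lemma commute_list_prod_apply [DecidableEq ι] {l : List (Matrix ι ι R)} {z : R}
    (h : ∀ X ∈ l, ∀ a b, Commute (X a b) z) (a b : ι) : Commute (l.prod a b) z := by
  have hmem : l.prod ∈ (Subsemiring.centralizer {z}).matrix := list_prod_mem fun X hX a b =>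
    Subsemiring.mem_centralizer_iff.mpr fun y hy => hy ▸ (h X hX a b).symm
  exact (Subsemiring.mem_centralizer_iff.mp (hmem a b) z rfl).symm

end MatrixProducts

section RTT

variable {ι : Type*} [LinearOrder ι]

/-- The braid form `(1 + β y) P R(x, y)` of the R-matrix, `P` being the flip of `V ⊗ V`. The factor
`1 + β y` clears the denominator of `x ⊖ y`, so that it makes sense over any ring. -/
def braidMatrix {K : Type*} [Ring K] (β x y : K) : Matrix (ι × ι) (ι × ι) K :=
  Matrix.of fun p q =>
    (if p = q then (if p.1 < p.2 then 1 + β * x else 1 + β * y) else 0) +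
    (if p = q.swap ∧ p.1 < p.2 then x - y else 0)

/-- The R-matrix whose value of `x ⊖ y` is `d`, viewed as a matrix in the first tensor factor whose
entries are operators on the second one. -/
def laxMatrix {K : Type*} [Ring K] (β d : K) : Matrix ι ι (Matrix ι ι K) :=
  Matrix.of fun i k => Matrix.of fun j l =>
    (if i = l ∧ j = k then (if k < i then 1 + β * d else 1) else 0) +
    (if j = l ∧ i = k ∧ j < k then d else 0)

variable [Fintype ι] {K S : Type*} [CommRing K] [Ring S] [Algebra K S]

/-- The relation `Ř(x, y) X₁ Y₂ = Y₁ X₂ Ř(x, y)`, with `Ř` the `braidMatrix`, between matrices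
with entries in a noncommutative algebra. -/
def RTTRelation (β x y : K) (X Y : Matrix ι ι S) : Prop :=
  SemiconjBy ((braidMatrix β x y).map (algebraMap K S)) (X ⊗ₖ Y) (Y ⊗ₖ X)

lemma braidMatrix_map_mul_apply (β x y : K) (Z : Matrix (ι × ι) (ι × ι) S) (p q : ι × ι) :
    ((braidMatrix β x y).map (algebraMap K S) * Z : Matrix (ι × ι) (ι × ι) S) p q =
      (if p.1 < p.2 then 1 + β * x else 1 + β * y) • Z p q +
        (if p.1 < p.2 then x - y else 0) • Z p.swap q := by
  have hswap (r : ι × ι) : p = r.swap ↔ p.swap = r := by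
    rw [← Prod.swap_inj, Prod.swap_swap]
  simp only [Matrix.mul_apply, Matrix.map_apply, ← Algebra.smul_def, braidMatrix,
    Matrix.of_apply, add_smul, Finset.sum_add_distrib, hswap, ite_and, ite_smul, zero_smul,
    Finset.sum_ite_eq, Finset.mem_univ, if_true]

lemma mul_braidMatrix_map_apply (β x y : K) (Z : Matrix (ι × ι) (ι × ι) S) (p q : ι × ι) :
    (Z * (braidMatrix β x y).map (algebraMap K S) : Matrix (ι × ι) (ι × ι) S) p q =
      (if q.1 < q.2 then 1 + β * x else 1 + β * y) • Z p q +
        (if q.2 < q.1 then x - y else 0) • Z p q.swap := by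
  simp only [Matrix.mul_apply, Matrix.map_apply, ← Algebra.commutes, ← Algebra.smul_def,
    braidMatrix, Matrix.of_apply, add_smul, Finset.sum_add_distrib, ite_and, ite_smul, zero_smul,
    Finset.sum_ite_eq', Finset.mem_univ, if_true, Prod.fst_swap, Prod.snd_swap]

lemma laxMatrix_mul_apply (β d : K) (i k : ι) (Z : Matrix ι ι K) (j l : ι) :
    (laxMatrix β d i k * Z) j l =
      (if j = k then (if k < i then 1 + β * d else 1) * Z i l else 0) +
        (if i = k ∧ j < k then d * Z j l else 0) := by
  simp only [laxMatrix, Matrix.mul_apply, Matrix.of_apply, add_mul, Finset.sum_add_distrib,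
    ite_and, ite_mul, zero_mul, Finset.sum_ite_eq, Finset.mem_univ, if_true]

theorem yangBaxter (β d e : K) :
    RTTRelation β d e (laxMatrix (ι := ι) β d) (laxMatrix β e) := by
  refine Matrix.ext fun ⟨i, i'⟩ ⟨k, k'⟩ => Matrix.ext fun j l => ?_
  simp only [braidMatrix_map_mul_apply, mul_braidMatrix_map_apply, Prod.swap_prod_mk,
    Matrix.kronecker_apply, Matrix.add_apply, Matrix.smul_apply, smul_eq_mul, laxMatrix_mul_apply]
  simp only [laxMatrix, Matrix.of_apply]
  -- For each relative order of the indices this is a polynomial identity in `β`, `d` and `e`.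
  grind (splits := 40)

namespace RTTRelation

variable {β x y : K}

lemma one : RTTRelation β x y (1 : Matrix ι ι S) 1 := by
  rw [RTTRelation, Matrix.one_kronecker_one]
  exact SemiconjBy.one_right _

lemma mul {X X' Y Y' : Matrix ι ι S} (h : RTTRelation β x y X Y) (h' : RTTRelation β x y X' Y')
    (hX'Y : ∀ a b c d, Commute (X' a b) (Y c d)) (hY'X : ∀ a b c d, Commute (Y' a b) (X c d)) :
    RTTRelation β x y (X * X') (Y * Y') := by
  rw [RTTRelation, mul_kronecker_mul_of_commute hX'Y, mul_kronecker_mul_of_commute hY'X]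
  exact SemiconjBy.mul_right h h'

lemma list_prod {J : Type*} {X Y : J → Matrix ι ι S} (h : ∀ i, RTTRelation β x y (X i) (Y i))
    (hcomm : Pairwise fun i j => ∀ a b c d, Commute (X i a b) (Y j c d)) {l : List J}
    (hl : l.Nodup) : RTTRelation β x y (l.map X).prod (l.map Y).prod := by
  induction l with
  | nil => exact one
  | cons i l ih =>
    obtain ⟨hi, hl⟩ := List.nodup_cons.mp hl
    have hne {j : J} (hj : j ∈ l) : j ≠ i := fun hji => hi (hji ▸ hj)
    refine (h i).mul (ih hl) (fun a b c d => commute_list_prod_apply ?_ a b)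
      fun a b c d => commute_list_prod_apply ?_ a b
    · exact List.forall_mem_map.mpr fun j hj a b => hcomm (hne hj) a b c d
    · exact List.forall_mem_map.mpr fun j hj a b => (hcomm (hne hj).symm c d a b).symm

lemma map {S' : Type*} [Ring S'] [Algebra K S'] (f : S →ₐ[K] S') {X Y : Matrix ι ι S}
    (h : RTTRelation β x y X Y) : RTTRelation β x y (X.map f) (Y.map f) := by
  have hmap := SemiconjBy.map h f.toRingHom.mapMatrix
  have hkronecker (X Y : Matrix ι ι S) : (X ⊗ₖ Y).map f = X.map f ⊗ₖ Y.map f :=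
    Matrix.ext fun _ _ => map_mul f _ _
  have hbraid : ((braidMatrix (ι := ι) β x y).map (algebraMap K S)).map f =
      (braidMatrix β x y).map (algebraMap K S') :=
    Matrix.ext fun _ _ => f.commutes _
  rw [RTTRelation, ← hkronecker, ← hkronecker, ← hbraid]
  exact hmap

lemma row_exchange {X Y : Matrix ι ι S} (h : RTTRelation β x y X Y) (r : ι) {a b : ι}
    (hab : a < b) :
    (y - x) • (Y r a * X r b) = (1 + β * y) • (Y r b * X r a - X r b * Y r a) := by
  have hentry := congrFun₂ h.eq (r, r) (b, a)
  simp only [braidMatrix_map_mul_apply, mul_braidMatrix_map_apply, Prod.swap_prod_mk,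
    Matrix.kronecker_apply, lt_irrefl, hab, hab.not_gt, if_true, if_false, zero_smul,
    add_zero] at hentry
  rw [smul_sub, hentry, sub_add_cancel_left, ← neg_smul, neg_sub]

end RTTRelation

end RTT

section Sites

variable {I α K : Type*} [Fintype I] [DecidableEq I] [DecidableEq α] [CommSemiring K]

/-- The operator on `V^{⊗I}` acting as `E` on the tensor factor `i` and as the identity on the
others. A basis vector of `V^{⊗I}` is a function from sites to indices. -/
def siteOp (i : I) (E : Matrix α α K) : Matrix (I → α) (I → α) K := Matrix.of fun s s' =>
  if Function.update s i (s' i) = s' then E (s i) (s' i) else 0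

lemma siteOp_one (i : I) : siteOp i (1 : Matrix α α K) = 1 := by
  ext s s'
  have hiff : Function.update s i (s' i) = s' ∧ s i = s' i ↔ s = s' :=
    ⟨fun ⟨h, hi⟩ => by rw [← h, ← hi, Function.update_eq_self],
      fun h => h ▸ ⟨Function.update_eq_self i s, rfl⟩⟩
  simp only [siteOp, Matrix.of_apply, Matrix.one_apply, ← ite_and, hiff]

variable [Fintype α]

lemma siteOp_mul_apply (i : I) (E : Matrix α α K) (Z : Matrix (I → α) (I → α) K)
    (s s' : I → α) :
    (siteOp i E * Z) s s' = ∑ k, E (s i) k * Z (Function.update s i k) s' := by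
  rw [Matrix.mul_apply]
  refine (Fintype.sum_of_injective (Function.update s i) (Function.update_injective s i) _ _
    (fun m hm => ?_) fun k => ?_).symm
  · rw [siteOp, Matrix.of_apply, if_neg fun h => hm ⟨m i, h⟩, zero_mul]
  · simp only [siteOp, Matrix.of_apply, Function.update_self, if_true]

lemma siteOp_mul (i : I) (E E' : Matrix α α K) :
    siteOp i (E * E') = siteOp i E * siteOp i E' := by
  ext s s'
  rw [← mul_one (siteOp i (E * E')), ← mul_one (siteOp i E * siteOp i E'), mul_assoc]
  simp only [siteOp_mul_apply, Matrix.one_apply, Function.update_self, Function.update_idem]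
  simp only [Matrix.mul_apply, Finset.sum_mul, Finset.mul_sum, mul_assoc]
  exact Finset.sum_comm

lemma siteOp_commute {i j : I} (hij : i ≠ j) (E E' : Matrix α α K) :
    Commute (siteOp i E) (siteOp j E') := by
  refine Matrix.ext fun s s' => ?_
  rw [← mul_one (siteOp i E * siteOp j E'), ← mul_one (siteOp j E' * siteOp i E), mul_assoc,
    mul_assoc]
  simp only [siteOp_mul_apply, Finset.mul_sum, Function.update_of_ne hij,
    Function.update_of_ne hij.symm]
  rw [Finset.sum_comm]
  refine Finset.sum_congr rfl fun l _ => Finset.sum_congr rfl fun k _ => ?_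
  rw [Function.update_comm hij, mul_left_comm]

/-- `siteOp i` as a homomorphism of algebras. -/
def siteHom (i : I) : Matrix α α K →ₐ[K] Matrix (I → α) (I → α) K :=
  AlgHom.ofLinearMap
    { toFun := siteOp i
      map_add' := fun E E' => by ext s s'; simp [siteOp, ite_add_zero]
      map_smul' := fun c E => by ext s s'; simp [siteOp] }
    (siteOp_one i) (siteOp_mul i)

end Sites

section Monodromy

variable [Field F] {β : F} {n N : ℕ}

lemma braidMatrix_eq_smul_om {ι : Type*} [LinearOrder ι] (x y : F) {τ : F}
    (hτ : 1 + β * τ ≠ 0) :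
    braidMatrix (ι := ι) β x y =
      (1 + β * τ) • braidMatrix β (om β x τ) (om β y τ) := by
  have hscale (z : F) : (1 + β * τ) * (1 + β * om β z τ) = 1 + β * z := by
    rw [om]; field_simp; ring
  have hscale_sub : (1 + β * τ) * (om β x τ - om β y τ) = x - y := by
    rw [om, om]; field_simp; ring
  ext p q
  simp only [braidMatrix, Matrix.of_apply, Matrix.smul_apply, smul_eq_mul, mul_add, mul_ite,
    mul_zero, hscale, hscale_sub]

/-- `R_{ai}(u, τ)` as a matrix in the auxiliary space with entries operators on `H`. -/
def siteLax (β u τ : F) (i : Fin N) :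
    Matrix (Fin n) (Fin n) (Matrix (Fin N → Fin n) (Fin N → Fin n) F) :=
  (laxMatrix β (om β u τ)).map (siteHom i)

lemma rttRelation_siteLax (x y : F) {τ : F} (hτ : 1 + β * τ ≠ 0) (i : Fin N) :
    RTTRelation β x y (siteLax (n := n) β x τ i) (siteLax β y τ i) := by
  have h := (yangBaxter (ι := Fin n) β (om β x τ) (om β y τ)).map (siteHom i)
  have hscale : (braidMatrix (ι := Fin n) β x y).map
      (algebraMap F (Matrix (Fin N → Fin n) (Fin N → Fin n) F)) =
      (1 + β * τ) • (braidMatrix β (om β x τ) (om β y τ)).map (algebraMap F _) := by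
    rw [braidMatrix_eq_smul_om x y hτ]
    exact Matrix.ext fun _ _ => map_smul (Algebra.linearMap F _) _ _
  rw [RTTRelation, hscale]
  exact (SemiconjBy.smul_left_iff₀ hτ).mpr h

lemma Rsite_eq_comp_siteLax (u τ : F) (i : Fin N) :
    Rsite n N β u τ i = Matrix.compRingEquiv (Fin n) (Fin N → Fin n) F (siteLax β u τ i) := by
  ext ⟨k, s⟩ ⟨c, s'⟩
  change _ = siteOp i (laxMatrix β (om β u τ) k c) s s'
  have hagree : Function.update s i (s' i) = s' ↔ ∀ j, j ≠ i → s j = s' j := by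
    simp only [Function.update_eq_iff, true_and]
  simp only [Rsite, Rmat, siteOp, laxMatrix, Matrix.of_apply, hagree, mul_ite, mul_one, mul_zero]
  grind

lemma of_blockOp_eq_prod_siteLax (u : F) (t : Fin N → F) :
    Matrix.of (blockOp n N β u t) =
      ((List.finRange N).reverse.map fun i => siteLax β u (t i) i).prod := by
  apply (Matrix.compRingEquiv (Fin n) (Fin N → Fin n) F).injective
  rw [map_list_prod, List.map_map, List.map_reverse, ← List.ofFn_eq_map]
  simp only [Function.comp_def, ← Rsite_eq_comp_siteLax]
  rfl

theorem rttRelation_blockOp (x y : F) {t : Fin N → F} (ht : ∀ i, 1 + β * t i ≠ 0) :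
    RTTRelation β x y (Matrix.of (blockOp n N β x t)) (Matrix.of (blockOp n N β y t)) := by
  rw [of_blockOp_eq_prod_siteLax, of_blockOp_eq_prod_siteLax]
  exact .list_prod (fun i => rttRelation_siteLax x y (ht i) i)
    (fun i j hij a b c d => siteOp_commute hij _ _)
    (List.nodup_reverse.mpr (List.nodup_finRange N))

theorem exchangeRelation_blockOp {t : Fin N → F} (ht : ∀ i, 1 + β * t i ≠ 0) (r : Fin n) :
    ExchangeRelation β fun a u => blockOp n N β u t r a :=
  fun _ _ hab x y => (rttRelation_blockOp y x ht).row_exchange r hab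

end Monodromy

lemma one_add_mul_ne_zero_of_algebraicIndependent {ι R A : Type*} [CommRing R] [Nontrivial R]
    [CommRing A] [Algebra R A] {v : ι → A} (hv : AlgebraicIndependent R v) (i j : ι) :
    1 + v i * v j ≠ 0 := by
  intro h
  have hpoly : (1 + MvPolynomial.X i * MvPolynomial.X j : MvPolynomial ι R) = 0 :=
    algebraicIndependent_iff.mp hv _ (by simpa using h)
  simpa using congrArg MvPolynomial.constantCoeff hpoly

theorem B_word_divided_difference_general [Field F] {M n N : ℕ} {β : F} {t : Fin N → F}
    (ht : ∀ i, 1 + β * t i ≠ 0) {σ : Fin (M + 1) → F} (hσ : Function.Injective σ) (r : Fin n)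
    {c : Fin (M + 1) → Fin n} (hc : StrictMono c) {w : Equiv.Perm (Fin (M + 1))}
    {L : List (Fin M)} (hL : IsReducedWord L (w⁻¹ * omegaPerm (M + 1)))
    (s s' : Fin N → Fin n) :
    (List.ofFn fun a => blockOp n N β (σ a) t r (c (w a))).prod s s' =
      ddbarWord β L
        (fun σ' => (List.ofFn fun a => blockOp n N β (σ' a) t r (c a.rev)).prod s s') σ :=
  apply_prod_ofFn_eq_ddbarWord (Matrix.entryLinearMap F F s s')
    ((exchangeRelation_blockOp ht r).comp_strictMono hc) hL hσ

/-- **Lemma `l5`**: for any `w ∈ S_{N-1}` (`n = N = M+2`),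
`B_{w(1)}(σ_1) B_{w(2)}(σ_2) ⋯ B_{w(N-1)}(σ_{N-1})
  = ∂̄^β_{w⁻¹ ω_{N-1}} (B_{N-1}(σ_1) B_{N-2}(σ_2) ⋯ B_1(σ_{N-1}))`,
the operators `∂̄^β` (given by any reduced word of `w⁻¹ ω_{N-1}`) being applied
entrywise to the matrix-valued function of `(σ_1,…,σ_{N-1})`. -/
theorem B_word_divided_difference [Field F] [CharZero F] (M : ℕ) (β : F)
    (t : Fin (M + 2) → F) (σ : Fin (M + 1) → F)
    (hind : AlgebraicIndependent ℚ
      (Sum.elim (fun _ : Unit => β) (Sum.elim σ t)))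
    (w : Equiv.Perm (Fin (M + 1))) (L : List (Fin M))
    (hL : IsReducedWord L (w⁻¹ * omegaPerm (M + 1))) :
    ∀ s s' : Fin (M + 2) → Fin (M + 2),
      ((List.ofFn fun a : Fin (M + 1) =>
          blockOp (M + 2) (M + 2) β (σ a) t 0 ((w a).succ)).prod) s s' =
        ddbarWord β L (fun σ' => descB M β t σ' s s') σ := by
  have ht (i : Fin (M + 2)) : 1 + β * t i ≠ 0 :=
    one_add_mul_ne_zero_of_algebraicIndependent hind (.inl ()) (.inr (.inr i))
  have hσ : Function.Injective σ :=
    hind.injective.comp (Sum.inr_injective.comp Sum.inl_injective)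
  exact B_word_divided_difference_general ht hσ 0 Fin.strictMono_succ hL
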